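/- For all λ-terms M and N and every variable x, T(M[N/x]) = ⋃ { supp(∂_x s · t̄) | s ∈ T(M) and t̄ a finite multiset of elements of T(N) }, where M[N/x] is the capture-avoiding substitution of N for x in M. -/

import Mathlib

/-! Ordinary λ-terms, in de Bruijn notation. -/
inductive Lam : Type
  | var : ℕ → Lam
  | lam : Lam → Lam
  | app : Lam → Lam → Lam
  deriving DecidableEq

namespace Lam

/-- Shift the free indices `≥ d` up by one. -/
def lift (d : ℕ) : Lam → Lam
  | var n => if n < d then var n else var (n + 1)
  | lam M => lam (lift (d + 1) M)
  | app P Q => app (lift d P) (lift d Q)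

/-- Capture-avoiding substitution of `N` for the free variable `k`. -/
def subst : Lam → ℕ → Lam → Lam
  | var n, k, N => if n = k then N else if k < n then var (n - 1) else var n
  | lam M, k, N => lam (subst M (k + 1) (lift 0 N))
  | app P Q, k, N => app (subst P k N) (subst Q k N)

/-- Number of free occurrences of the variable `k`. -/
def count (k : ℕ) : Lam → ℕ
  | var n => if n = k then 1 else 0
  | lam M => count (k + 1) M
  | app P Q => count k P + count k Q

/-- One-step β-reduction. -/
inductive Beta : Lam → Lam → Prop
  | beta (M N : Lam) : Beta (app (lam M) N) (subst M 0 N)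
  | lam {M M'} : Beta M M' → Beta (lam M) (lam M')
  | appL {P P' Q} : Beta P P' → Beta (app P Q) (app P' Q)
  | appR {P Q Q'} : Beta Q Q' → Beta (app P Q) (app P Q')

/-- The head of the application spine is a variable, with no λ on the spine. -/
def neutral : Lam → Bool
  | var _ => true
  | lam _ => false
  | app P _ => neutral P

/-- Head-normal forms: `λx₁…λxₘ. x N₁ … Nₙ`. -/
def isHNF : Lam → Prop
  | var _ => True
  | lam M => isHNF M
  | app P _ => neutral P = true

/-- The head-reduction function `H`: contracts the head redex, identity on head-normal
forms. -/
def H : Lam → Lam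
  | var n => var n
  | lam M => lam (H M)
  | app (lam P) Q => subst P 0 Q
  | app (var n) Q => app (var n) Q
  | app (app P₁ P₂) Q => app (H (app P₁ P₂)) Q

/-- The left-parallel reduction function `L`: identity on β-normal forms, propagated to
the arguments on head-normal forms, contraction of the head redex otherwise. -/
def L : Lam → Lam
  | var n => var n
  | lam M => lam (L M)
  | app (lam P) Q => subst P 0 Q
  | app (var n) Q => app (var n) (L Q)
  | app (app P₁ P₂) Q =>
      if neutral (app P₁ P₂) then app (L (app P₁ P₂)) (L Q)
      else app (L (app P₁ P₂)) Q

/-- Iterated application `M N₁ … Nₙ`. -/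
def mkApps (M : Lam) (Ns : List Lam) : Lam := Ns.foldl app M

/-- All free variables are `< d`. -/
def ClosedAt (d : ℕ) : Lam → Prop
  | var n => n < d
  | lam M => ClosedAt (d + 1) M
  | app P Q => ClosedAt d P ∧ ClosedAt d Q

/-- `M` is head-normalizable: it β-reduces in finitely many steps to a head-normal form. -/
def HeadNormalizable (M : Lam) : Prop :=
  ∃ N, Relation.ReflTransGen Beta M N ∧ isHNF N

/-- `M` is a β-normal form: it contains no β-redex, i.e. admits no β-step. -/
def BetaNF (M : Lam) : Prop := ¬∃ N, Beta M N

/-- `M` is β-normalizable: it β-reduces in finitely many steps to a β-normal form. -/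
def BetaNormalizable (M : Lam) : Prop :=
  ∃ N, Relation.ReflTransGen Beta M N ∧ BetaNF N

/-- `M` is strongly β-normalizable: no infinite β-reduction sequence starts from `M`. -/
def StronglyNormalizable (M : Lam) : Prop := Acc (fun N M' => Beta M' N) M

end Lam

/-! Rigid resource terms (the nonzero ones), in de Bruijn notation:
`a ::= x | λx.a | ⟨c⟩d⃗` with `d⃗` a list of rigid terms.
The term `0` is represented by `none : Option Rig`. -/
inductive Rig : Type
  | var : ℕ → Rig
  | lam : Rig → Rig
  | app : Rig → List Rig → Rig

namespace Rig

mutual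
/-- Number of free occurrences of the variable `k` in a rigid term. -/
def countR (k : ℕ) : Rig → ℕ
  | var n => if n = k then 1 else 0
  | lam a => countR (k + 1) a
  | app c ds => countR k c + countRList k ds
termination_by a => sizeOf a

def countRList (k : ℕ) : List Rig → ℕ
  | [] => 0
  | d :: ds => countR k d + countRList k ds
termination_by ds => sizeOf ds
end

mutual
/-- Shift the free indices `≥ d` up by one. -/
def liftR (d : ℕ) : Rig → Rig
  | var n => if n < d then var n else var (n + 1)
  | lam a => lam (liftR (d + 1) a)
  | app c ds => app (liftR d c) (liftRList d ds)
termination_by a => sizeOf a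

def liftRList (d : ℕ) : List Rig → List Rig
  | [] => []
  | a :: as => liftR d a :: liftRList d as
termination_by as => sizeOf as
end

mutual
/-- Rigid substitution `a[b⃗/k]`: the list `b⃗` is distributed, in order, over the
free occurrences of the variable `k`; the result is `none` (i.e. `0`) when
`|b⃗| ≠ n_k(a)`. -/
def rsubst (k : ℕ) : Rig → List Rig → Option Rig
  | var n, bs =>
      if n = k then (match bs with | [b] => some b | _ => none)
      else (match bs with
            | [] => some (if k < n then var (n - 1) else var n)
            | _ => none)
  | lam a, bs => (rsubst (k + 1) a (liftRList 0 bs)).map lam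
  | app c ds, bs =>
      match rsubst k c (bs.take (countR k c)), rsubstList k ds (bs.drop (countR k c)) with
      | some c', some ds' => some (app c' ds')
      | _, _ => none
termination_by a _ => sizeOf a

def rsubstList (k : ℕ) : List Rig → List Rig → Option (List Rig)
  | [], bs => if bs.isEmpty then some [] else none
  | d :: ds, bs =>
      match rsubst k d (bs.take (countR k d)), rsubstList k ds (bs.drop (countR k d)) with
      | some d', some ds' => some (d' :: ds')
      | _, _ => none
termination_by ds _ => sizeOf ds
end

/-- One-step rigid resource reduction `→_r` (contextual closure of
`⟨λx.a⟩b⃗ →_r a[b⃗/x]`); the result may be `0` (i.e. `none`), which annihilates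
the surrounding context. -/
inductive RStep : Rig → Option Rig → Prop
  | beta (a : Rig) (bs : List Rig) : RStep (app (lam a) bs) (rsubst 0 a bs)
  | lam {a r} : RStep a r → RStep (lam a) (r.map lam)
  | head {c r} (ds : List Rig) : RStep c r → RStep (app c ds) (r.map (fun c' => app c' ds))
  | arg {d r} (c : Rig) (ds₁ ds₂ : List Rig) :
      RStep d r → RStep (app c (ds₁ ++ d :: ds₂)) (r.map (fun d' => app c (ds₁ ++ d' :: ds₂)))

/-- `→_r` on rigid terms extended with `0`; `0` is inert. -/
inductive RStepO : Option Rig → Option Rig → Prop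
  | mk {a r} : RStep a r → RStepO (some a) r

/-- `r` is a `→_r`-normal form (`0` is one). -/
def RNormal (r : Option Rig) : Prop := ¬∃ r', RStepO r r'

/-- The head of the application spine is a variable, with no λ on the spine. -/
def rNeutral : Rig → Bool
  | var _ => true
  | lam _ => false
  | app c _ => rNeutral c

/-- Rigid head-normal forms among nonzero terms: `λx₁…λxₘ.⟨…⟨x⟩d⃗₁…⟩d⃗ₙ`
(the term `0` is a head-normal form, but it is treated separately). -/
def rIsHNF : Rig → Prop
  | var _ => True
  | lam a => rIsHNF a
  | app c _ => rNeutral c = true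

/-- The rigid head-reduction function `H_r`: contracts the head redex, identity on
head-normal forms; the result may be `0` (i.e. `none`). -/
def Hr : Rig → Option Rig
  | var n => some (var n)
  | lam a => (Hr a).map lam
  | app (lam a) bs => rsubst 0 a bs
  | app (var n) ds => some (app (var n) ds)
  | app (app c₁ c₂) ds => (Hr (app c₁ c₂)).map (fun c' => app c' ds)

/-- `H_r` extended to terms-or-`0`. -/
def HrO : Option Rig → Option Rig := fun r => r.bind Hr

mutual
/-- The rigid left-parallel reduction function `L_r`: identity on `→_r`-normal forms,
applied componentwise to the argument lists on head-normal forms, contraction of the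
head redex otherwise; the result may be `0` (i.e. `none`). -/
def Lr : Rig → Option Rig
  | var n => some (var n)
  | lam a => (Lr a).map lam
  | app (lam a) bs => rsubst 0 a bs
  | app (var n) ds => (LrList ds).map (fun ds' => app (var n) ds')
  | app (app c₁ c₂) ds =>
      if rNeutral (app c₁ c₂) then
        match Lr (app c₁ c₂), LrList ds with
        | some c', some ds' => some (app c' ds')
        | _, _ => none
      else (Lr (app c₁ c₂)).map (fun c' => app c' ds)
termination_by a => sizeOf a

def LrList : List Rig → Option (List Rig)
  | [] => some []
  | d :: ds =>
      match Lr d, LrList ds with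
      | some d', some ds' => some (d' :: ds')
      | _, _ => none
termination_by ds => sizeOf ds
end

/-- `L_r` extended to terms-or-`0`. -/
def LrO : Option Rig → Option Rig := fun r => r.bind Lr

/-- Positive resource terms: no empty list/multiset occurs as the argument of an
application. -/
inductive rPositive : Rig → Prop
  | var (n : ℕ) : rPositive (var n)
  | lam {a} : rPositive a → rPositive (lam a)
  | app {c : Rig} {ds : List Rig} :
      rPositive c → ds ≠ [] → (∀ d ∈ ds, rPositive d) → rPositive (app c ds)

end Rig

/-- The rigid expansion `T_r(M)` of a λ-term (equivalently, the support of its Taylor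
expansion, with multisets presented by lists: `Texp M` is closed under permutation of
argument lists). -/
def Texp : Lam → Set Rig
  | Lam.var n => {Rig.var n}
  | Lam.lam M => {a | ∃ b ∈ Texp M, a = Rig.lam b}
  | Lam.app P Q => {a | ∃ c ∈ Texp P, ∃ ds : List Rig, (∀ d ∈ ds, d ∈ Texp Q) ∧ a = Rig.app c ds}

namespace Rig

/-- The support of the `n`-linear substitution `∂_k a · b̄`, where the multiset `b̄` is
presented by the list `bs`: the finite formal sum (multiset) of all nonzero results of
rigid substitutions along bijective assignments, i.e. permutations of `bs`. -/
def permSubst (k : ℕ) (a : Rig) (bs : List Rig) : Multiset Rig :=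
  ↑(bs.permutations.filterMap (fun bs' => rsubst k a bs'))

/-- One step of non-erasing ε-resource reduction `→^{¬e}_{∂ε}` out of a single resource
term, producing a finite formal sum (a multiset) of resource terms: non-erasing resource
β-steps `⟨λx.a⟩b̄ → ∂_x a · b̄` (with `x ∈ FV(a)`) and resource σ₁-steps, under any
context. -/
inductive NEStep : Rig → Multiset Rig → Prop
  | beta {a : Rig} (bs : List Rig) :
      0 < countR 0 a → NEStep (app (lam a) bs) (permSubst 0 a bs)
  | sigma (a : Rig) (ts qs : List Rig) :
      NEStep (app (app (lam a) ts) qs) {app (lam (app a (liftRList 0 qs))) ts}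
  | lam {a σ} : NEStep a σ → NEStep (lam a) (σ.map lam)
  | head {c σ} (ds : List Rig) : NEStep c σ → NEStep (app c ds) (σ.map (fun c' => app c' ds))
  | arg {d σ} (c : Rig) (ds₁ ds₂ : List Rig) :
      NEStep d σ → NEStep (app c (ds₁ ++ d :: ds₂)) (σ.map (fun d' => app c (ds₁ ++ d' :: ds₂)))

/-- Non-erasing ε-resource reduction on finite formal sums, extended by linearity. -/
def NEStepSum (σ τ : Multiset Rig) : Prop :=
  ∃ (a : Rig) (ρ υ : Multiset Rig), σ = a ::ₘ ρ ∧ NEStep a υ ∧ τ = υ + ρ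

/-- `σ` is a `→^{¬e}_{∂ε}`-normal form. -/
def NENormal (σ : Multiset Rig) : Prop := ¬∃ τ, NEStepSum σ τ

end Rig

/-- One step of non-erasing ε-reduction on λ-terms: non-erasing β-steps
`(λx.M)N → M[N/x]` (with `x ∈ FV(M)`) together with σ₁-steps
`((λx.M)N)P → (λx.MP)N` (`x ∉ FV(P)`), under any context. -/
inductive NEeps : Lam → Lam → Prop
  | beta {M : Lam} (N : Lam) :
      0 < Lam.count 0 M → NEeps (Lam.app (Lam.lam M) N) (Lam.subst M 0 N)
  | sigma (M N P : Lam) :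
      NEeps (Lam.app (Lam.app (Lam.lam M) N) P)
        (Lam.app (Lam.lam (Lam.app M (Lam.lift 0 P))) N)
  | lam {M M'} : NEeps M M' → NEeps (Lam.lam M) (Lam.lam M')
  | appL {P P' Q} : NEeps P P' → NEeps (Lam.app P Q) (Lam.app P' Q)
  | appR {P Q Q'} : NEeps Q Q' → NEeps (Lam.app P Q) (Lam.app P Q')

/-- The set `S` of λ-terms. -/
inductive SLam : Lam → Prop
  | varApp (n : ℕ) (Ms : List Lam) :
      (∀ M ∈ Ms, SLam M) → SLam (Lam.mkApps (Lam.var n) Ms)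
  | lam {M} : SLam M → SLam (Lam.lam M)
  | redex (M₀ M₁ : Lam) (Ms : List Lam) :
      SLam M₁ → SLam (Lam.mkApps (Lam.subst M₀ 0 M₁) Ms) →
      SLam (Lam.mkApps (Lam.app (Lam.lam M₀) M₁) Ms)

/-- λI-terms: every abstraction binds a variable occurring free in its body. -/
def LamI : Lam → Prop
  | Lam.var _ => True
  | Lam.lam M => LamI M ∧ 0 < Lam.count 0 M
  | Lam.app P Q => LamI P ∧ LamI Q

/-! Rigid substitution consumes its list of resources from left to right, each subterm taking
exactly as many as it has occurrences of the variable. Hence, once extended to sets of terms and to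
all lists of resources drawn from a set, it commutes with every constructor of resource terms, just
as ordinary substitution commutes with every constructor of λ-terms. Summing over permutations
changes nothing, because the lists drawn from a set are closed under permutation. -/

section ListsOver

variable {α β : Type*}

/-- The lists with all entries in `S`; up to permutation, the finite multisets of elements
of `S`. -/
def listsOver (S : Set α) : Set (List α) := {l | ∀ x ∈ l, x ∈ S}

theorem nil_mem_listsOver (S : Set α) : [] ∈ listsOver S := List.forall_mem_nil _

theorem cons_mem_listsOver {S : Set α} {a : α} {l : List α} :
    a :: l ∈ listsOver S ↔ a ∈ S ∧ l ∈ listsOver S := List.forall_mem_cons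

theorem append_mem_listsOver {S : Set α} {l₁ l₂ : List α} :
    l₁ ++ l₂ ∈ listsOver S ↔ l₁ ∈ listsOver S ∧ l₂ ∈ listsOver S := List.forall_mem_append

theorem mem_listsOver_of_perm {S : Set α} {l₁ l₂ : List α} (h : l₁.Perm l₂)
    (hl : l₂ ∈ listsOver S) : l₁ ∈ listsOver S := fun x hx => hl x (h.subset hx)

theorem listsOver_eq_insert (S : Set α) :
    listsOver S = insert [] (Set.image2 List.cons S (listsOver S)) := by
  ext l
  cases l <;> simp [nil_mem_listsOver, cons_mem_listsOver]

theorem eq_listsOver_of_eq_insert {S : Set α} {X : Set (List α)}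
    (hX : X = insert [] (Set.image2 List.cons S X)) : X = listsOver S := by
  ext l
  induction l with
  | nil => rw [hX]; simp [nil_mem_listsOver]
  | cons a l ih => rw [hX]; simp [cons_mem_listsOver, ih]

theorem listsOver_image (f : α → β) (S : Set α) :
    listsOver (f '' S) = List.map f '' listsOver S := by
  refine (eq_listsOver_of_eq_insert ?_).symm
  conv_lhs => rw [listsOver_eq_insert, Set.image_insert_eq, List.map_nil,
    Set.image_image2_distrib fun _ _ => List.map_cons]

end ListsOver

section ResourceImage

variable {ρ α β γ α' β' γ' : Type*}

/-- The nonzero results of `f a ts` for `a ∈ A` and `ts` a list of resources drawn from `B`, where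
`none` stands for `0`. This extends rigid substitution to sets of terms and sets of resources. -/
def resourceImage (f : α → List ρ → Option β) (A : Set α) (B : Set ρ) : Set β :=
  {u | ∃ a ∈ A, ∃ ts ∈ listsOver B, f a ts = some u}

theorem resourceImage_insert (f : α → List ρ → Option β) (a : α) (A : Set α) (B : Set ρ) :
    resourceImage f (insert a A) B = resourceImage f {a} B ∪ resourceImage f A B := by
  ext u
  simp [resourceImage]

theorem resourceImage_image2 {f : α → List ρ → Option α'} {g : β → List ρ → Option β'}
    {h : γ → List ρ → Option γ'} {φ : α → β → γ} {ψ : α' → β' → γ'} {n : α → ℕ}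
    (length_eq : ∀ a ts a', f a ts = some a' → ts.length = n a)
    (h_eq : ∀ a b ts,
      h (φ a b) ts = Option.map₂ ψ (f a (ts.take (n a))) (g b (ts.drop (n a))))
    (A : Set α) (A' : Set β) (B : Set ρ) :
    resourceImage h (Set.image2 φ A A') B =
      Set.image2 ψ (resourceImage f A B) (resourceImage g A' B) := by
  ext u
  constructor
  · rintro ⟨_, ⟨a, ha, b, hb, rfl⟩, ts, hts, hu⟩
    obtain ⟨a', b', hfa, hgb, rfl⟩ := Option.map₂_eq_some_iff.1 (h_eq a b ts ▸ hu)
    rw [← List.take_append_drop (n a) ts, append_mem_listsOver] at hts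
    exact ⟨a', ⟨a, ha, _, hts.1, hfa⟩, b', ⟨b, hb, _, hts.2, hgb⟩, rfl⟩
  · rintro ⟨a', ⟨a, ha, ts₁, hts₁, hfa⟩, b', ⟨b, hb, ts₂, hts₂, hgb⟩, rfl⟩
    refine ⟨φ a b, ⟨a, ha, b, hb, rfl⟩, ts₁ ++ ts₂, append_mem_listsOver.2 ⟨hts₁, hts₂⟩, ?_⟩
    have hlen := length_eq a ts₁ a' hfa
    rw [h_eq, List.take_left' hlen, List.drop_left' hlen, hfa, hgb, Option.map₂_some_some]

end ResourceImage

namespace Rig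

theorem liftRList_eq_map (d : ℕ) : liftRList d = List.map (liftR d) := by
  funext l
  induction l with
  | nil => rw [liftRList, List.map_nil]
  | cons a l ih => rw [liftRList, ih, List.map_cons]

theorem rsubst_var_self_eq_some_iff (k : ℕ) (bs : List Rig) (u : Rig) :
    rsubst k (var k) bs = some u ↔ bs = [u] := by
  rcases bs with _ | ⟨b, _ | ⟨b', bs⟩⟩ <;> simp [rsubst]

theorem rsubst_var_eq_some_iff_of_ne {k n : ℕ} (h : n ≠ k) (bs : List Rig) (u : Rig) :
    rsubst k (var n) bs = some u ↔
      bs = [] ∧ (if k < n then var (n - 1) else var n) = u := by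
  rcases bs with _ | ⟨b, _ | ⟨b', bs⟩⟩ <;> simp [rsubst, h]

theorem rsubst_lam (k : ℕ) (a : Rig) (bs : List Rig) :
    rsubst k (lam a) bs = (rsubst (k + 1) a (bs.map (liftR 0))).map lam := by
  rw [rsubst, liftRList_eq_map]

theorem rsubst_app (k : ℕ) (c : Rig) (ds bs : List Rig) :
    rsubst k (app c ds) bs = Option.map₂ app (rsubst k c (bs.take (countR k c)))
      (rsubstList k ds (bs.drop (countR k c))) := by
  rw [rsubst]
  cases rsubst k c (bs.take (countR k c)) <;>
    cases rsubstList k ds (bs.drop (countR k c)) <;> rfl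

theorem rsubstList_nil_eq_some_iff (k : ℕ) (bs us : List Rig) :
    rsubstList k [] bs = some us ↔ bs = [] ∧ [] = us := by
  cases bs <;> simp [rsubstList]

theorem rsubstList_cons (k : ℕ) (d : Rig) (ds bs : List Rig) :
    rsubstList k (d :: ds) bs = Option.map₂ List.cons (rsubst k d (bs.take (countR k d)))
      (rsubstList k ds (bs.drop (countR k d))) := by
  rw [rsubstList]
  cases rsubst k d (bs.take (countR k d)) <;>
    cases rsubstList k ds (bs.drop (countR k d)) <;> rfl

mutual

theorem length_eq_countR_of_rsubst_eq_some (k : ℕ) : ∀ (a : Rig) (bs : List Rig) (u : Rig),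
    rsubst k a bs = some u → bs.length = countR k a
  | var n, bs, u, h => by
    rw [countR]
    split_ifs with hn
    · subst hn
      rw [(rsubst_var_self_eq_some_iff n bs u).1 h, List.length_singleton]
    · rw [((rsubst_var_eq_some_iff_of_ne hn bs u).1 h).1, List.length_nil]
  | lam a, bs, u, h => by
    rw [rsubst_lam] at h
    obtain ⟨v, hv, -⟩ := Option.map_eq_some_iff.1 h
    rw [countR, ← length_eq_countR_of_rsubst_eq_some (k + 1) a _ v hv, List.length_map]
  | app c ds, bs, u, h => by
    rw [rsubst_app] at h
    obtain ⟨c', ds', hc, hds, -⟩ := Option.map₂_eq_some_iff.1 h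
    rw [countR, ← length_eq_countR_of_rsubst_eq_some k c _ c' hc,
      ← length_eq_countRList_of_rsubstList_eq_some k ds _ ds' hds, ← List.length_append,
      List.take_append_drop]

theorem length_eq_countRList_of_rsubstList_eq_some (k : ℕ) :
    ∀ (ds bs us : List Rig), rsubstList k ds bs = some us → bs.length = countRList k ds
  | [], bs, us, h => by
    rw [((rsubstList_nil_eq_some_iff k bs us).1 h).1, countRList, List.length_nil]
  | d :: ds, bs, us, h => by
    rw [rsubstList_cons] at h
    obtain ⟨d', ds', hd, hds, -⟩ := Option.map₂_eq_some_iff.1 h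
    rw [countRList, ← length_eq_countR_of_rsubst_eq_some k d _ d' hd,
      ← length_eq_countRList_of_rsubstList_eq_some k ds _ ds' hds, ← List.length_append,
      List.take_append_drop]

end

theorem resourceImage_rsubst_var_self (k : ℕ) (B : Set Rig) :
    resourceImage (rsubst k) {var k} B = B := by
  ext u
  simp [resourceImage, rsubst_var_self_eq_some_iff, cons_mem_listsOver, nil_mem_listsOver]

theorem resourceImage_rsubst_var_of_ne {k n : ℕ} (h : n ≠ k) (B : Set Rig) :
    resourceImage (rsubst k) {var n} B = {if k < n then var (n - 1) else var n} := by
  ext u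
  simp [resourceImage, rsubst_var_eq_some_iff_of_ne h, nil_mem_listsOver]

theorem resourceImage_rsubst_image_lam (k : ℕ) (A B : Set Rig) :
    resourceImage (rsubst k) (lam '' A) B =
      lam '' resourceImage (rsubst (k + 1)) A (liftR 0 '' B) := by
  ext u
  rw [resourceImage, resourceImage, listsOver_image]
  constructor
  · rintro ⟨_, ⟨a, ha, rfl⟩, ts, hts, hu⟩
    rw [rsubst_lam] at hu
    obtain ⟨v, hv, rfl⟩ := Option.map_eq_some_iff.1 hu
    exact ⟨v, ⟨a, ha, _, ⟨ts, hts, rfl⟩, hv⟩, rfl⟩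
  · rintro ⟨v, ⟨a, ha, _, ⟨ts, hts, rfl⟩, hv⟩, rfl⟩
    exact ⟨lam a, ⟨a, ha, rfl⟩, ts, hts, by rw [rsubst_lam, hv, Option.map_some]⟩

theorem resourceImage_rsubst_image2_app (k : ℕ) (A : Set Rig) (L : Set (List Rig))
    (B : Set Rig) :
    resourceImage (rsubst k) (Set.image2 app A L) B =
      Set.image2 app (resourceImage (rsubst k) A B) (resourceImage (rsubstList k) L B) :=
  resourceImage_image2 (length_eq_countR_of_rsubst_eq_some k) (rsubst_app k) A L B

theorem resourceImage_rsubstList_nil (k : ℕ) (B : Set Rig) :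
    resourceImage (rsubstList k) {[]} B = {[]} := by
  ext us
  simp [resourceImage, rsubstList_nil_eq_some_iff, nil_mem_listsOver]

theorem resourceImage_rsubstList_listsOver (k : ℕ) (A B : Set Rig) :
    resourceImage (rsubstList k) (listsOver A) B = listsOver (resourceImage (rsubst k) A B) := by
  refine eq_listsOver_of_eq_insert ?_
  conv_lhs => rw [listsOver_eq_insert, resourceImage_insert, resourceImage_rsubstList_nil,
    resourceImage_image2 (length_eq_countR_of_rsubst_eq_some k) (rsubstList_cons k),
    Set.singleton_union]

theorem mem_permSubst {k : ℕ} {a u : Rig} {bs : List Rig} :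
    u ∈ permSubst k a bs ↔ ∃ bs', bs'.Perm bs ∧ rsubst k a bs' = some u := by
  simp only [permSubst, Multiset.mem_coe, List.mem_filterMap, List.mem_permutations]

theorem resourceImage_rsubst_eq_setOf_mem_permSubst (k : ℕ) (A B : Set Rig) :
    resourceImage (rsubst k) A B =
      {u | ∃ s ∈ A, ∃ ts ∈ listsOver B, u ∈ permSubst k s ts} := by
  ext u
  constructor
  · rintro ⟨s, hs, ts, hts, hu⟩
    exact ⟨s, hs, ts, hts, mem_permSubst.2 ⟨ts, .refl ts, hu⟩⟩
  · rintro ⟨s, hs, ts, hts, hu⟩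
    obtain ⟨ts', hperm, hu'⟩ := mem_permSubst.1 hu
    exact ⟨s, hs, ts', mem_listsOver_of_perm hperm hts, hu'⟩

end Rig

theorem Texp_lam (M : Lam) : Texp (.lam M) = Rig.lam '' Texp M := by
  ext u
  simp only [Texp, Set.mem_ofPred_eq, Set.mem_image, eq_comm]

theorem Texp_app (P Q : Lam) :
    Texp (.app P Q) = Set.image2 Rig.app (Texp P) (listsOver (Texp Q)) := by
  ext u
  simp only [Texp, listsOver, Set.mem_ofPred_eq, Set.mem_image2, eq_comm]

theorem Texp_lift (M : Lam) (d : ℕ) : Texp (M.lift d) = Rig.liftR d '' Texp M := by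
  induction M generalizing d with
  | var n =>
    rw [Lam.lift, Texp, Set.image_singleton, Rig.liftR]
    split_ifs <;> rfl
  | lam M ih =>
    rw [Lam.lift, Texp_lam, Texp_lam, ih, Set.image_image, Set.image_image]
    simp only [Rig.liftR]
  | app P Q ihP ihQ =>
    rw [Lam.lift, Texp_app, Texp_app, ihP, ihQ, listsOver_image, ← Rig.liftRList_eq_map]
    exact (Set.image_image2_distrib fun c ds => by rw [Rig.liftR]).symm

theorem Texp_subst (M N : Lam) (k : ℕ) :
    Texp (M.subst k N) = resourceImage (Rig.rsubst k) (Texp M) (Texp N) := by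
  induction M generalizing k N with
  | var n =>
    rw [Lam.subst, Texp]
    split_ifs with h hlt
    · rw [h, Rig.resourceImage_rsubst_var_self]
    · rw [Rig.resourceImage_rsubst_var_of_ne h, if_pos hlt, Texp]
    · rw [Rig.resourceImage_rsubst_var_of_ne h, if_neg hlt, Texp]
  | lam M ih =>
    rw [Lam.subst, Texp_lam, ih, Texp_lift, Texp_lam, Rig.resourceImage_rsubst_image_lam]
  | app P Q ihP ihQ =>
    rw [Lam.subst, Texp_app, ihP, ihQ, Texp_app, Rig.resourceImage_rsubst_image2_app,
      Rig.resourceImage_rsubstList_listsOver]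

/-- `T(M[N/x]) = ⋃ { supp(∂_x s · t̄) | s ∈ T(M), t̄ a multiset of elements
of T(N) }` (multisets are presented by lists up to permutation: `Rig.permSubst k s ts`
is the formal sum over all bijective assignments of the resources in `ts` to the
occurrences of the variable `k` in `s`). -/
theorem Taylor_substitution (M N : Lam) (k : ℕ) :
    Texp (Lam.subst M k N) =
      {u : Rig | ∃ s ∈ Texp M, ∃ ts : List Rig,
        (∀ t ∈ ts, t ∈ Texp N) ∧ u ∈ Rig.permSubst k s ts} := by
  rw [Texp_subst, Rig.resourceImage_rsubst_eq_setOf_mem_permSubst]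
  rfl
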